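/- arXiv:2007.10483 — 2 statements merged into one kernel-verified Lean document; each statement's English description precedes it below -/
import Mathlib

section
/- Let b ∈ (1/16, 1/12] be a real number, and set a± := (1 ± √(1 − 12b))/2, r := 2√b / (1 − √(1 − 12b)), and θ := arccos( √(1 − 8b − √(1 − 12b)) / (4√b) ). Define vectors in ℂ²: ψ₁ := (1, 0), ψ₂ := (r, √(1 − r²)), ψ₃ := (1/√3, −√(2/3)·e^{iθ}), ψ₄ := (1/√3, −√(2/3)·e^{−iθ}), and define 2×2 matrices E₁ := a₋·ψ₁ψ₁*, E₂ := a₋·ψ₂ψ₂*, E₃ := a₊·ψ₃ψ₃*, E₄ := a₊·ψ₄ψ₄*. Then {E₁, E₂, E₃, E₄} is a semi-SIC POVM with parameter b on ℂ²: each E_x is positive semidefinite of rank one, E₁ + E₂ + E₃ + E₄ = 1, Tr[E_x E_y] = b for all x ≠ y, and {E₁, E₂, E₃, E₄} spans the real vector space of 2×2 Hermitian matrices. -/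
open Matrix
open scoped ComplexOrder

noncomputable section

/-- The rank-one matrix `ψψ*` with entries `ψ i * conj (ψ j)`. -/
def outer (ψ : Fin 2 → ℂ) : Matrix (Fin 2) (Fin 2) ℂ :=
  Matrix.vecMulVec ψ (star ψ)

/-- `a₊ = (1 + √(1 − 12b))/2`. -/
def aP (b : ℝ) : ℝ := (1 + Real.sqrt (1 - 12 * b)) / 2

/-- `a₋ = (1 − √(1 − 12b))/2`. -/
def aM (b : ℝ) : ℝ := (1 - Real.sqrt (1 - 12 * b)) / 2

/-- `r = 2√b / (1 − √(1 − 12b))`. -/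
def rr (b : ℝ) : ℝ := 2 * Real.sqrt b / (1 - Real.sqrt (1 - 12 * b))

/-- `θ = arccos( √(1 − 8b − √(1 − 12b)) / (4√b) )`. -/
def th (b : ℝ) : ℝ :=
  Real.arccos (Real.sqrt (1 - 8 * b - Real.sqrt (1 - 12 * b)) / (4 * Real.sqrt b))

/-- `ψ₁ = (1, 0)`. -/
def psi1 : Fin 2 → ℂ := ![1, 0]

/-- `ψ₂ = (r, √(1 − r²))`. -/
def psi2 (b : ℝ) : Fin 2 → ℂ := ![(rr b : ℂ), ((Real.sqrt (1 - (rr b) ^ 2) : ℝ) : ℂ)]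

/-- `ψ₃ = (1/√3, −√(2/3)·e^{iθ})`. -/
def psi3 (b : ℝ) : Fin 2 → ℂ :=
  ![((1 / Real.sqrt 3 : ℝ) : ℂ),
    -((Real.sqrt (2 / 3) : ℝ) : ℂ) * Complex.exp ((th b : ℂ) * Complex.I)]

/-- `ψ₄ = (1/√3, −√(2/3)·e^{−iθ})`. -/
def psi4 (b : ℝ) : Fin 2 → ℂ :=
  ![((1 / Real.sqrt 3 : ℝ) : ℂ),
    -((Real.sqrt (2 / 3) : ℝ) : ℂ) * Complex.exp (-(th b : ℂ) * Complex.I)]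

/-- The canonical family `E₁ = a₋ψ₁ψ₁*, E₂ = a₋ψ₂ψ₂*, E₃ = a₊ψ₃ψ₃*, E₄ = a₊ψ₄ψ₄*`. -/
def canonE (b : ℝ) : Fin 4 → Matrix (Fin 2) (Fin 2) ℂ :=
  ![(aM b : ℂ) • outer psi1,
    (aM b : ℂ) • outer (psi2 b),
    (aP b : ℂ) • outer (psi3 b),
    (aP b : ℂ) • outer (psi4 b)]


lemma smul_outer_eq (a x y : ℂ) : a • outer ![x, y] =
    !![a * (x * star x), a * (x * star y); a * (y * star x), a * (y * star y)] := by
  ext i j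
  fin_cases i <;> fin_cases j <;> rfl

lemma canon_params (b : ℝ) (hb : b ∈ Set.Ioc (1 / 16 : ℝ) (1 / 12)) :
    ∃ s g h : ℝ, 0 ≤ s ∧ s < 1 / 2 ∧ b = (1 - s ^ 2) / 12 ∧ 0 < g ∧ 0 < h ∧
      g ^ 2 = (1 + s) * (1 - 2 * s) / 72 ∧ h ^ 2 = (1 + s) ^ 2 / 18 - g ^ 2 ∧
      aM b = (1 - s) / 2 ∧ aP b = (1 + s) / 2 ∧
      canonE b = ![!![(((1 - s) / 2 : ℝ) : ℂ), 0; 0, 0],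
        !![(((1 + s) / 6 : ℝ) : ℂ), ((2 * g : ℝ) : ℂ);
          ((2 * g : ℝ) : ℂ), (((1 - 2 * s) / 3 : ℝ) : ℂ)],
        !![(((1 + s) / 6 : ℝ) : ℂ), -(g : ℂ) + h * Complex.I;
          -(g : ℂ) - h * Complex.I, (((1 + s) / 3 : ℝ) : ℂ)],
        !![(((1 + s) / 6 : ℝ) : ℂ), -(g : ℂ) - h * Complex.I;
          -(g : ℂ) + h * Complex.I, (((1 + s) / 3 : ℝ) : ℂ)]] := by
  obtain ⟨hb1, hb2⟩ := hb
  obtain ⟨s, hs⟩ : ∃ s, s = Real.sqrt (1 - 12 * b) := ⟨_, rfl⟩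
  have hs0 : 0 ≤ s := hs ▸ Real.sqrt_nonneg _
  have hs2 : s ^ 2 = 1 - 12 * b := by rw [hs]; exact Real.sq_sqrt (by linarith)
  have hs1 : s < 1 / 2 := by nlinarith
  have hbs : b = (1 - s ^ 2) / 12 := by linarith
  have hM : aM b = (1 - s) / 2 := by rw [aM, ← hs]
  have hP : aP b = (1 + s) / 2 := by rw [aP, ← hs]
  have h1s : 0 < 1 - s := by linarith
  have hsb : 0 < Real.sqrt b := Real.sqrt_pos.2 (by linarith)
  have hsb2 : Real.sqrt b ^ 2 = b := Real.sq_sqrt (by linarith)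
  have hr0 : 0 < rr b := by rw [rr, ← hs]; positivity
  have hr2 : rr b ^ 2 = (1 + s) / (3 * (1 - s)) := by
    rw [rr, ← hs, div_pow, mul_pow, hsb2, hbs]; field_simp; ring
  have ht : 0 < 1 - rr b ^ 2 := by
    rw [hr2, sub_pos, div_lt_one (by linarith)]; linarith
  have ht0 := Real.sqrt_pos.2 ht
  have ht2 := Real.sq_sqrt ht.le
  have hw : 0 < 1 - 8 * b - s := by rw [hbs]; nlinarith
  have hc : Real.cos (th b) = Real.sqrt (1 - 8 * b - s) / (4 * Real.sqrt b) := by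
    rw [th, ← hs]
    apply Real.cos_arccos
    · have : 0 ≤ Real.sqrt (1 - 8 * b - s) / (4 * Real.sqrt b) := by positivity
      linarith
    · rw [div_le_one (by positivity)]
      apply Real.sqrt_le_iff.2
      refine ⟨by positivity, ?_⟩
      rw [mul_pow, hsb2]; linarith
  have hc0 : 0 < Real.cos (th b) := by
    rw [hc]; have := Real.sqrt_pos.2 hw; positivity
  have hc2 : Real.cos (th b) ^ 2 = (1 - 2 * s) / (4 * (1 + s)) := by
    rw [hc, div_pow, mul_pow, hsb2, Real.sq_sqrt hw.le]
    have hbp : b ≠ 0 := by linarith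
    rw [div_eq_div_iff (by positivity) (by positivity), hbs]; ring
  have hn2 := Real.sin_sq (th b)
  have hc3 : Real.cos (th b) ^ 2 < 1 := by
    rw [hc2, div_lt_one (by positivity)]; linarith
  have hn0 : 0 < Real.sin (th b) := by
    have h1 : 0 ≤ Real.sin (th b) :=
      Real.sin_nonneg_of_nonneg_of_le_pi (Real.arccos_nonneg _) (Real.arccos_le_pi _)
    rcases h1.eq_or_lt with h | h
    · rw [← h] at hn2; nlinarith
    · exact h
  have hk0 : 0 < 1 / Real.sqrt 3 := by positivity
  have hk2 : (1 / Real.sqrt 3) ^ 2 = 1 / 3 := by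
    rw [div_pow, Real.sq_sqrt (by norm_num)]; norm_num
  have hq0 : 0 < Real.sqrt (2 / 3) := by positivity
  have hq2 : Real.sqrt (2 / 3) ^ 2 = 2 / 3 := Real.sq_sqrt (by norm_num)
  have he : Complex.exp ((th b : ℂ) * Complex.I)
      = (Real.cos (th b) : ℂ) + (Real.sin (th b) : ℂ) * Complex.I := by
    rw [Complex.exp_mul_I]; push_cast; rfl
  have he' : Complex.exp (-(th b : ℂ) * Complex.I)
      = (Real.cos (th b) : ℂ) - (Real.sin (th b) : ℂ) * Complex.I := by
    rw [Complex.exp_mul_I, Complex.cos_neg, Complex.sin_neg]; push_cast; ring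
  have hE : canonE b = ![(aM b : ℂ) • outer psi1,
    (aM b : ℂ) • outer (psi2 b),
    (aP b : ℂ) • outer (psi3 b),
    (aP b : ℂ) • outer (psi4 b)] := rfl
  rw [hE, hM, hP]
  unfold psi2 psi3 psi4 psi1
  rw [he, he']
  generalize rr b = r at *
  generalize Real.sqrt (1 - r ^ 2) = t at *
  generalize 1 / Real.sqrt 3 = k at *
  generalize Real.sqrt (2 / 3) = q at *
  generalize Real.cos (th b) = c at *
  generalize Real.sin (th b) = n at *
  have hg0 : 0 < (1 + s) / 2 * (k * q * c) := by positivity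
  have hg2 : ((1 + s) / 2 * (k * q * c)) ^ 2 = (1 + s) * (1 - 2 * s) / 72 := by
    rw [mul_pow, mul_pow, mul_pow, hk2, hq2, hc2]; field_simp; ring
  have hgt : (1 - s) / 2 * (r * t) = 2 * ((1 + s) / 2 * (k * q * c)) := by
    have : ((1 - s) / 2 * (r * t)) ^ 2 = (2 * ((1 + s) / 2 * (k * q * c))) ^ 2 := by
      rw [mul_pow 2, hg2, mul_pow, mul_pow, ht2, hr2]; field_simp; ring
    exact (pow_left_inj₀ (by positivity) (by positivity) two_ne_zero).1 this
  have hu : (1 - s) / 2 * r ^ 2 = (1 + s) / 6 := by rw [hr2]; field_simp; ring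
  have hv : (1 - s) / 2 * t ^ 2 = (1 - 2 * s) / 3 := by rw [ht2, hr2]; field_simp; ring
  refine ⟨s, (1 + s) / 2 * (k * q * c), (1 + s) / 2 * (k * q * n), hs0, hs1, hbs, hg0,
    by positivity, hg2, ?_, rfl, rfl, ?_⟩
  · simp only [mul_pow, hk2, hq2, hn2]; ring
  have hcn : c ^ 2 + n ^ 2 = 1 := by linarith
  rw [← hgt, ← hu, ← hv]
  have hkk : (1 - s) / 2 * r ^ 2 = (1 + s) / 2 * k ^ 2 := by rw [hu, hk2]; ring
  have hqq : (1 + s) / 3 = (1 + s) / 2 * (q ^ 2 * (c ^ 2 + n ^ 2)) := by rw [hq2, hcn]; ring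
  have hkkC := congrArg (fun x : ℝ => (x : ℂ)) hkk
  have hqqC := congrArg (fun x : ℝ => (x : ℂ)) hqq
  push_cast at hkkC hqqC
  have hI := Complex.I_sq
  simp only [smul_outer_eq]
  funext x
  fin_cases x <;> ext i j <;> fin_cases i <;> fin_cases j <;> simp
  all_goals first
    | (left; ring; done)
    | (ring; done)
    | (linear_combination -hkkC)
    | (linear_combination -hqqC - (1 + (s : ℂ)) / 2 * q ^ 2 * n ^ 2 * hI)

lemma rank_one_aux (A : Matrix (Fin 2) (Fin 2) ℂ) (a : ℂ) (v : Fin 2 → ℂ)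
    (hA : A = a • outer v) (h0 : A ≠ 0) : A.rank = 1 := by
  have h1 : A.rank ≤ 1 := by
    rw [hA, outer, ← Matrix.smul_vecMulVec]; exact Matrix.rank_vecMulVec_le _ _
  have h2 : A.rank ≠ 0 := by 
    intro h
    apply h0
    rw [Matrix.rank, Submodule.finrank_eq_zero, LinearMap.range_eq_bot] at h
    apply Matrix.toLin'.injective
    rw [map_zero]
    exact h
  omega

theorem canonE_isSemiSIC (b : ℝ) (hb : b ∈ Set.Ioc (1 / 16 : ℝ) (1 / 12)) :
    (∀ x, (canonE b x).PosSemidef) ∧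
    (∀ x, (canonE b x).rank = 1) ∧
    (∑ x, canonE b x = 1) ∧
    (∀ x y, x ≠ y → (canonE b x * canonE b y).trace = (b : ℂ)) ∧
    (∀ A : Matrix (Fin 2) (Fin 2) ℂ, A.IsHermitian →
      A ∈ Submodule.span ℝ (Set.range (canonE b))) := by
  obtain ⟨s, g, h, hs0, hs1, hbs, hg0, hh0, hg2, hh2, hM, hP, hE⟩ := canon_params b hb
  have hM0 : 0 < aM b := by rw [hM]; linarith
  have hP0 : 0 < aP b := by rw [hP]; linarith
  have hps : ∀ (a : ℝ) (v : Fin 2 → ℂ), 0 < a → ((a : ℂ) • outer v).PosSemidef := by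
    intro a v ha
    exact (Matrix.posSemidef_vecMulVec_self_star v).smul (by exact_mod_cast ha.le)
  refine ⟨?_, ?_, ?_, ?_, ?_⟩
  · intro x
    fin_cases x
    · exact hps _ _ hM0
    · exact hps _ _ hM0
    · exact hps _ _ hP0
    · exact hps _ _ hP0
  · have hne : ∀ x, canonE b x ≠ 0 := by
      intro x hx
      have h00 := congrFun (congrFun hx 0) 0
      rw [hE] at h00
      have e1 : (1 - s) / 2 ≠ 0 := by linarith
      have e2 : (1 + s) / 6 ≠ 0 := by positivity
      fin_cases x
      · exact e1 (Complex.ofReal_eq_zero.1 h00)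
      · exact e2 (Complex.ofReal_eq_zero.1 h00)
      · exact e2 (Complex.ofReal_eq_zero.1 h00)
      · exact e2 (Complex.ofReal_eq_zero.1 h00)
    intro x
    have := hne x
    fin_cases x
    · exact rank_one_aux _ _ _ rfl this
    · exact rank_one_aux _ _ _ rfl this
    · exact rank_one_aux _ _ _ rfl this
    · exact rank_one_aux _ _ _ rfl this
  · rw [hE]
    ext i j
    fin_cases i <;> fin_cases j <;> simp [Fin.sum_univ_four] <;> ring
  · have hgC : (g : ℂ) ^ 2 = (1 + s) * (1 - 2 * s) / 72 := by
      exact_mod_cast congrArg (fun x : ℝ => (x : ℂ)) hg2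
    have hhC : (h : ℂ) ^ 2 = (1 + s) ^ 2 / 18 - g ^ 2 := by
      exact_mod_cast congrArg (fun x : ℝ => (x : ℂ)) hh2
    have hI := Complex.I_sq
    intro x y hxy
    rw [hE, hbs]
    fin_cases x <;> fin_cases y <;> first | exact absurd rfl hxy | skip
    all_goals
      simp [Matrix.trace_fin_two, Matrix.mul_apply]
      ring_nf
      try simp only [hI, hhC, hgC]
      try ring_nf
      try simp only [hgC]
      try ring_nf
  · intro A hA
    have hA00 : A 0 0 = ((A 0 0).re : ℂ) := (Complex.conj_eq_iff_re.1 (hA.apply 0 0)).symm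
    have hA11 : A 1 1 = ((A 1 1).re : ℂ) := (Complex.conj_eq_iff_re.1 (hA.apply 1 1)).symm
    have hA10 : A 1 0 = star (A 0 1) := (hA.apply 1 0).symm
    rw [Submodule.mem_span_range_iff_exists_fun]
    generalize hα : (A 0 0).re = α at *
    generalize hδ : (A 1 1).re = δ at *
    obtain ⟨x, hx⟩ : ∃ x, x = (A 0 1).re := ⟨_, rfl⟩
    obtain ⟨y, hy⟩ : ∃ y, y = (A 0 1).im := ⟨_, rfl⟩
    obtain ⟨w, hw⟩ : ∃ w, w = δ + (1 + s) / (3 * g) * x := ⟨_, rfl⟩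
    obtain ⟨S, hS⟩ : ∃ S, S = 2 * w - x / g := ⟨_, rfl⟩
    have h1s : 1 - s ≠ 0 := by linarith
    obtain ⟨z, hz⟩ : ∃ z, z = (α - w * ((1 + s) / 6) - S * ((1 + s) / 6)) / ((1 - s) / 2) :=
      ⟨_, rfl⟩
    refine ⟨![z, w,
      (S + y / h) / 2, (S - y / h) / 2], ?_⟩
    rw [hE]
    ext i j
    fin_cases i <;> fin_cases j <;> apply Complex.ext <;>
      simp [Fin.sum_univ_four, hA00, hA11, hA10, ← hx, ← hy]
    all_goals first
      | (field_simp; ring; done)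
      | (rw [hz]; field_simp; ring; done)
      | (rw [hS]; field_simp; ring; done)
      | (rw [hS, hw]; field_simp; ring; done)
end
end

section
/- Let {G_x}_{x=1}^{4} be any semi-SIC POVM with parameter b on ℂ². Then b ∈ (1/16, 1/12], and there exist a 2×2 unitary matrix U and a permutation σ of {1,2,3,4} such that U G_{σ(x)} U† = E_x for x = 1,2,3,4, where {E₁, E₂, E₃, E₄} is the canonical family: E₁ := a₋·ψ₁ψ₁*, E₂ := a₋·ψ₂ψ₂*, E₃ := a₊·ψ₃ψ₃*, E₄ := a₊·ψ₄ψ₄* with a± := (1 ± √(1 − 12b))/2, r := 2√b/(1 − √(1 − 12b)), θ := arccos(√(1 − 8b − √(1 − 12b))/(4√b)), ψ₁ := (1, 0), ψ₂ := (r, √(1 − r²)), ψ₃ := (1/√3, −√(2/3)·e^{iθ}), ψ₄ := (1/√3, −√(2/3)·e^{−iθ}). -/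
open Matrix
open scoped ComplexOrder

noncomputable section

/-- A semi-SIC POVM with parameter `b` on `ℂ^d`. -/
def IsSemiSIC (d : ℕ) (b : ℝ) (E : Fin (d ^ 2) → Matrix (Fin d) (Fin d) ℂ) : Prop :=
  (∀ x, (E x).PosSemidef) ∧
  (∀ x, (E x).rank = 1) ∧
  (∑ x, E x = 1) ∧
  (∀ A : Matrix (Fin d) (Fin d) ℂ, A.IsHermitian → A ∈ Submodule.span ℝ (Set.range E)) ∧
  (∀ x y, x ≠ y → (E x * E y).trace = (b : ℂ))

lemma outer_of_rank_one (M : Matrix (Fin 2) (Fin 2) ℂ) (hp : M.PosSemidef) (hr : M.rank = 1) :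
    ∃ v : Fin 2 → ℂ, M = outer v ∧ v ≠ 0 := by
  have hdet : M.det = 0 := by
    by_contra h
    have hu : IsUnit M := (Matrix.isUnit_iff_isUnit_det M).2 (isUnit_iff_ne_zero.2 h)
    have := Matrix.rank_of_isUnit M hu
    simp at this
    omega
  have h0 := hp.diag_nonneg (i := 0)
  have h1 := hp.diag_nonneg (i := 1)
  have h10 : M 1 0 = star (M 0 1) := (hp.1.apply 1 0).symm
  obtain ⟨p, hp0, hp'⟩ : ∃ p : ℝ, 0 ≤ p ∧ M 0 0 = p :=
    ⟨(M 0 0).re, (Complex.le_def.1 h0).1, Complex.ext rfl (Complex.le_def.1 h0).2.symm⟩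
  obtain ⟨q, hq0, hq'⟩ : ∃ p : ℝ, 0 ≤ p ∧ M 1 1 = p :=
    ⟨(M 1 1).re, (Complex.le_def.1 h1).1, Complex.ext rfl (Complex.le_def.1 h1).2.symm⟩
  rw [Matrix.det_fin_two, h10, hp', hq'] at hdet
  have key : ∃ v : Fin 2 → ℂ, M = outer v := by
    rcases eq_or_lt_of_le hp0 with h | h
    · have hz : M 0 1 = 0 := by
        rw [← h] at hdet
        simpa using hdet
      refine ⟨![0, (Real.sqrt q : ℂ)], ?_⟩
      have hs : (Real.sqrt q : ℂ) * Real.sqrt q = q := by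
        exact_mod_cast Real.mul_self_sqrt hq0
      ext i j
      fin_cases i <;> fin_cases j <;>
        simp [outer, Matrix.vecMulVec_apply, hp', hq', h10, hz, ← h, hs]
    · have hs : (Real.sqrt p : ℂ) * Real.sqrt p = p := by
        exact_mod_cast Real.mul_self_sqrt hp0
      have hs0 : (Real.sqrt p : ℂ) ≠ 0 := by
        exact_mod_cast (Real.sqrt_pos.2 h).ne'
      refine ⟨![(Real.sqrt p : ℂ), star (M 0 1) / Real.sqrt p], ?_⟩
      ext i j
      fin_cases i <;> fin_cases j <;>
        simp [outer, Matrix.vecMulVec_apply, hp', hq', h10, hs]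
      · field_simp
      · field_simp
      · field_simp
        rw [pow_two, hs]
        simp at hdet
        linear_combination hdet
  obtain ⟨v, hv⟩ := key
  refine ⟨v, hv, ?_⟩
  rintro rfl
  have : M = 0 := by rw [hv]; simp [outer]
  rw [this] at hr
  simp at hr

/-- Informational completeness makes the family injective. -/
lemma G_inj (G : Fin 4 → Matrix (Fin 2) (Fin 2) ℂ)
    (h : ∀ A : Matrix (Fin 2) (Fin 2) ℂ, A.IsHermitian → A ∈ Submodule.span ℝ (Set.range G))
    (x y : Fin 4) (hxy : x ≠ y) : G x ≠ G y := by
  intro he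
  let f : (Fin 4 → ℝ) →ₗ[ℝ] Matrix (Fin 2) (Fin 2) ℂ := Fintype.linearCombination ℝ G
  let g : Matrix (Fin 2) (Fin 2) ℂ →ₗ[ℝ] (Fin 4 → ℝ) :=
    { toFun := fun M => ![(M 0 0).re, (M 1 1).re, (M 0 1).re, (M 0 1).im]
      map_add' := by
        intro M N
        ext i
        fin_cases i <;> simp
      map_smul' := by
        intro c N
        ext i
        fin_cases i <;> simp }
  have hs : Function.Surjective (g ∘ₗ f) := by
    intro t
    let A : Matrix (Fin 2) (Fin 2) ℂ := !![(t 0 : ℂ), ⟨t 2, t 3⟩; ⟨t 2, - t 3⟩, (t 1 : ℂ)]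
    have hA : A.IsHermitian := by
      ext i j
      fin_cases i <;> fin_cases j <;> simp [A, Complex.ext_iff]
    obtain ⟨c, hc⟩ := (Submodule.mem_span_range_iff_exists_fun ℝ).1 (h A hA)
    refine ⟨c, ?_⟩
    have : f c = A := by simpa [f, Fintype.linearCombination_apply] using hc
    rw [LinearMap.comp_apply, this]
    ext i
    fin_cases i <;> simp [g, A]
  have hi := LinearMap.injective_iff_surjective.2 hs
  have e : (g ∘ₗ f) (Pi.single x 1) = (g ∘ₗ f) (Pi.single y 1) := by
    simp [f, he, Fintype.linearCombination_apply_single]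
  have e2 := congrFun (hi e) x
  simp [hxy] at e2

lemma trace_outer (v : Fin 2 → ℂ) :
    (outer v).trace = ((Complex.normSq (v 0) + Complex.normSq (v 1) : ℝ) : ℂ) := by
  simp [outer, Matrix.trace_fin_two, Matrix.vecMulVec_apply, Complex.mul_conj]

lemma trace_outer_mul (v w : Fin 2 → ℂ) :
    (outer v * outer w).trace
      = ((Complex.normSq (star (v 0) * w 0 + star (v 1) * w 1) : ℝ) : ℂ) := by
  rw [← Complex.mul_conj]
  simp [outer, Matrix.trace_fin_two, Matrix.vecMulVec_apply, Matrix.mul_apply, Fin.sum_univ_two]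
  ring

/-- Rotating a pair of vectors of the same norm. -/
lemma exists_unitary (a b : ℝ) (ha : 0 < a) (hb : 0 < b) (hab : b < a ^ 2) (v w : Fin 2 → ℂ)
    (hv : Complex.normSq (v 0) + Complex.normSq (v 1) = a)
    (hw : Complex.normSq (w 0) + Complex.normSq (w 1) = a)
    (hvw : Complex.normSq (star (v 0) * w 0 + star (v 1) * w 1) = b) :
    ∃ U ∈ Matrix.unitaryGroup (Fin 2) ℂ,
      U * outer v * Uᴴ = !![(a : ℂ), 0; 0, 0] ∧
      U * outer w * Uᴴ = !![((b / a : ℝ) : ℂ), ((Real.sqrt b * Real.sqrt (a ^ 2 - b) / a : ℝ) : ℂ);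
        ((Real.sqrt b * Real.sqrt (a ^ 2 - b) / a : ℝ) : ℂ), (((a ^ 2 - b) / a : ℝ) : ℂ)] := by
  obtain ⟨m, hm0, hm⟩ : ∃ m : ℝ, m = Real.sqrt (a ^ 2 - b) ∧ m * m = a ^ 2 - b :=
    ⟨_, rfl, Real.mul_self_sqrt (by linarith)⟩
  obtain ⟨n, hn0, hn⟩ : ∃ n : ℝ, n = Real.sqrt b ∧ n * n = b :=
    ⟨_, rfl, Real.mul_self_sqrt hb.le⟩
  rw [← hm0, ← hn0]
  have hnne : n ≠ 0 := by rintro rfl; simp at hn; linarith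
  obtain ⟨k, hk⟩ : ∃ k : ℝ, k * k * a = 1 := by
    refine ⟨1 / Real.sqrt a, ?_⟩
    have := Real.mul_self_sqrt ha.le
    have h0 := (Real.sqrt_pos.2 ha).ne'
    field_simp
    nlinarith
  obtain ⟨p, hp⟩ : ∃ p, p = v 0 := ⟨_, rfl⟩
  obtain ⟨q, hq⟩ : ∃ p, p = v 1 := ⟨_, rfl⟩
  obtain ⟨s, hs⟩ : ∃ p, p = w 0 := ⟨_, rfl⟩
  obtain ⟨t, ht⟩ : ∃ p, p = w 1 := ⟨_, rfl⟩
  rw [← hp, ← hq] at hv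
  rw [← hs, ← ht] at hw
  rw [← hp, ← hq, ← hs, ← ht] at hvw
  have hv' : p * star p + q * star q = a := by
    rw [← hv]; simp [Complex.mul_conj]
  have hw' : s * star s + t * star t = a := by
    rw [← hw]; simp [Complex.mul_conj]
  have hvw' : (star p * s + star q * t) * (p * star s + q * star t) = b := by
    rw [← hvw, ← Complex.mul_conj]; simp
  have hdd : (p * t - q * s) * (star p * star t - star q * star s) = m * m := by
    have e : (m : ℂ) * m = a ^ 2 - b := by exact_mod_cast hm
    rw [e]
    linear_combination (s * star s + t * star t) * hv' + a * hw' - hvw'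
  have hmne : m ≠ 0 := by rintro rfl; simp at hm; linarith
  have hmC : (m : ℂ) ≠ 0 := by exact_mod_cast hmne
  have hnC : (n : ℂ) ≠ 0 := by exact_mod_cast hnne
  have hnn : (n : ℂ) * n = b := by exact_mod_cast hn
  have hdne : p * t - q * s ≠ 0 := by
    intro h
    rw [h, zero_mul] at hdd
    exact mul_ne_zero hmC hmC hdd.symm
  have hdne' : star p * star t - star q * star s ≠ 0 := by
    intro h
    rw [h, mul_zero] at hdd
    exact mul_ne_zero hmC hmC hdd.symm
  obtain ⟨β, hβ1, hβ2, hβ3⟩ : ∃ β : ℂ, β * star β = 1 ∧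
      β * (p * t - q * s) * n = (star p * s + star q * t) * m ∧
      star β * (star p * star t - star q * star s) * n = (p * star s + q * star t) * m := by
    have e1 : star ((star p * s + star q * t) * m / (n * (p * t - q * s))) =
        (p * star s + q * star t) * m / (n * (star p * star t - star q * star s)) := by
      simp
    refine ⟨(star p * s + star q * t) * m / (n * (p * t - q * s)), ?_, ?_, ?_⟩
    · rw [e1, div_mul_div_comm, div_eq_one_iff_eq
        (mul_ne_zero (mul_ne_zero hnC hdne) (mul_ne_zero hnC hdne'))]
      linear_combination m * m * hvw' - m * m * hnn - n * n * hdd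
    · rw [div_mul_eq_mul_div, div_mul_eq_mul_div, div_eq_iff (mul_ne_zero hnC hdne)]
      ring
    · rw [e1, div_mul_eq_mul_div, div_mul_eq_mul_div, div_eq_iff (mul_ne_zero hnC hdne')]
      ring
  have kC : (k : ℂ) * k * a = 1 := by exact_mod_cast hk
  have conj_outer : ∀ (U : Matrix (Fin 2) (Fin 2) ℂ) (x : Fin 2 → ℂ),
      U * outer x * Uᴴ = outer (U *ᵥ x) := by
    intro U x
    rw [outer, outer, Matrix.mul_vecMulVec, Matrix.vecMulVec_mul, Matrix.star_mulVec]
  have haC : (a : ℂ) ≠ 0 := by exact_mod_cast ha.ne'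
  have sk : star (k : ℂ) = k := by simp
  have hk2 : (k : ℂ) * k = 1 / a := by field_simp; linear_combination kC
  let U : Matrix (Fin 2) (Fin 2) ℂ := !![k * star p, k * star q; -(k * β * q), k * β * p]
  have hUv : U *ᵥ v = ![(k : ℂ) * a, 0] := by
    ext i
    fin_cases i
    · simp [U, Matrix.mulVec, dotProduct, Fin.sum_univ_two, ← hp, ← hq]
      simp at hv'
      linear_combination k * hv'
    · simp [U, Matrix.mulVec, dotProduct, Fin.sum_univ_two, ← hp, ← hq]
      ring
  have hUw : U *ᵥ w = ![k * (star p * s + star q * t), k * (β * (p * t - q * s))] := by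
    ext i
    fin_cases i
    · simp [U, Matrix.mulVec, dotProduct, Fin.sum_univ_two, ← hs, ← ht]
      ring
    · simp [U, Matrix.mulVec, dotProduct, Fin.sum_univ_two, ← hs, ← ht]
      ring
  simp only [← starRingEnd_apply] at *
  refine ⟨U, ?_, ?_, ?_⟩
  · rw [Matrix.mem_unitaryGroup_iff]
    ext i j
    fin_cases i <;> fin_cases j <;>
      simp [U, Matrix.mul_apply, Fin.sum_univ_two, Matrix.star_apply]
    · linear_combination k * k * hv' + kC
    · ring
    · ring
    · linear_combination k * k * β * (starRingEnd ℂ) β * hv' + β * (starRingEnd ℂ) β * kC + hβ1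
  · rw [conj_outer, hUv]
    ext i j
    fin_cases i <;> fin_cases j <;> simp [outer, Matrix.vecMulVec_apply]
    linear_combination a * kC
  · rw [conj_outer, hUw]
    ext i j
    fin_cases i <;> fin_cases j <;> simp [outer, Matrix.vecMulVec_apply]
    · rw [eq_div_iff haC]
      linear_combination k * k * a * hvw' + b * kC
    · rw [eq_div_iff haC]
      apply mul_right_cancel₀ hnC
      linear_combination k * k * a * ((starRingEnd ℂ) p * s + (starRingEnd ℂ) q * t) * hβ3
        + k * k * a * m * hvw' + b * m * kC - m * hnn
    · rw [eq_div_iff haC]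
      apply mul_right_cancel₀ hnC
      linear_combination k * k * a * (p * (starRingEnd ℂ) s + q * (starRingEnd ℂ) t) * hβ2
        + k * k * a * m * hvw' + b * m * kC - m * hnn
    · rw [eq_div_iff haC]
      have e : (m : ℂ) * m = a ^ 2 - b := by exact_mod_cast hm
      rw [← e]
      linear_combination k * k * a * β * (starRingEnd ℂ) β * hdd + k * k * a * m * m * hβ1
        + m * m * kC

lemma outer_two (x y : ℂ) :
    outer ![x, y] = !![x * star x, x * star y; y * star x, y * star y] := by
  ext i j
  fin_cases i <;> fin_cases j <;> simp [outer]

lemma smul_outer_real (a x y : ℝ) : (a : ℂ) • outer ![(x : ℂ), (y : ℂ)] =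
    !![((a * x * x : ℝ) : ℂ), ((a * x * y : ℝ) : ℂ);
      ((a * x * y : ℝ) : ℂ), ((a * y * y : ℝ) : ℂ)] := by
  rw [outer_two]
  ext i j
  fin_cases i <;> fin_cases j <;> simp <;> ring

lemma smul_outer_exp (a x y θ : ℝ) :
    (a : ℂ) • outer ![(x : ℂ), -(y : ℂ) * Complex.exp ((θ : ℂ) * Complex.I)] =
    !![((a * x * x : ℝ) : ℂ), ⟨-(a * x * y * Real.cos θ), a * x * y * Real.sin θ⟩;
      ⟨-(a * x * y * Real.cos θ), -(a * x * y * Real.sin θ)⟩, ((a * y * y : ℝ) : ℂ)] := by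
  have hsc := Real.sin_sq_add_cos_sq θ
  have e : -(y : ℂ) * Complex.exp ((θ : ℂ) * Complex.I)
      = ⟨-(y * Real.cos θ), -(y * Real.sin θ)⟩ := by
    rw [Complex.exp_mul_I, ← Complex.ofReal_cos, ← Complex.ofReal_sin]
    apply Complex.ext <;> simp [-Complex.ofReal_cos, -Complex.ofReal_sin]
  rw [outer_two, e]
  ext i j
  fin_cases i <;> fin_cases j <;> apply Complex.ext <;> simp
  · ring
  · ring
  · ring
  · ring
  · ring
  · linear_combination a * y * y * hsc
  · right; ring

/-- Elementary facts on the parameters. -/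
lemma param (b : ℝ) (h1 : 1 / 16 < b) (h2 : b ≤ 1 / 12) :
    0 < aM b ∧ 0 < aP b ∧ aM b + aP b = 1 ∧ aM b * aP b = 3 * b ∧ b < aM b ^ 2 ∧
    canonE b 0 = !![(aM b : ℂ), 0; 0, 0] ∧
    canonE b 1 = !![((b / aM b : ℝ) : ℂ), ((Real.sqrt b * Real.sqrt (aM b ^ 2 - b) / aM b : ℝ) : ℂ);
        ((Real.sqrt b * Real.sqrt (aM b ^ 2 - b) / aM b : ℝ) : ℂ), (((aM b ^ 2 - b) / aM b : ℝ) : ℂ)] ∧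
    ∃ Y : ℝ, 0 ≤ Y ∧ (- (aP b * Real.sqrt (aM b ^ 2 - b) / (6 * Real.sqrt b))) ^ 2 + Y ^ 2
        = 2 * aP b ^ 2 / 9 ∧
      canonE b 2 = !![((aP b / 3 : ℝ) : ℂ),
          ⟨- (aP b * Real.sqrt (aM b ^ 2 - b) / (6 * Real.sqrt b)), Y⟩;
          ⟨- (aP b * Real.sqrt (aM b ^ 2 - b) / (6 * Real.sqrt b)), -Y⟩,
          ((2 * aP b / 3 : ℝ) : ℂ)] ∧
      canonE b 3 = !![((aP b / 3 : ℝ) : ℂ),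
          ⟨- (aP b * Real.sqrt (aM b ^ 2 - b) / (6 * Real.sqrt b)), -Y⟩;
          ⟨- (aP b * Real.sqrt (aM b ^ 2 - b) / (6 * Real.sqrt b)), Y⟩,
          ((2 * aP b / 3 : ℝ) : ℂ)] := by
  obtain ⟨s, hs⟩ : ∃ s, s = Real.sqrt (1 - 12 * b) := ⟨_, rfl⟩
  have hs0 : 0 ≤ s := by rw [hs]; positivity
  have hss : s * s = 1 - 12 * b := by rw [hs]; exact Real.mul_self_sqrt (by linarith)
  have hs8 : s < 1 - 8 * b := by
    rw [hs, Real.sqrt_lt' (by linarith)]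
    nlinarith
  have haM : aM b = (1 - s) / 2 := by rw [aM, hs]
  have haP : aP b = (1 + s) / 2 := by rw [aP, hs]
  obtain ⟨a, ha⟩ : ∃ a, a = aM b := ⟨_, rfl⟩
  obtain ⟨A, hA⟩ : ∃ A, A = aP b := ⟨_, rfl⟩
  rw [← ha] at haM
  rw [← hA] at haP
  have hb : 0 < b := by linarith
  have ha0 : 0 < a := by linarith
  have hA0 : 0 < A := by linarith
  have hab2 : a ^ 2 - b = (1 - 8 * b - s) / 2 := by rw [haM]; nlinarith
  have hab : b < a ^ 2 := by linarith
  have haA : a * A = 3 * b := by rw [haM, haP]; nlinarith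
  have hm := Real.mul_self_sqrt (show 0 ≤ a ^ 2 - b by linarith)
  have hmp := Real.sqrt_pos.2 (show 0 < a ^ 2 - b by linarith)
  have hn := Real.mul_self_sqrt hb.le
  have hnp := Real.sqrt_pos.2 hb
  obtain ⟨m, hm0⟩ : ∃ m, m = Real.sqrt (a ^ 2 - b) := ⟨_, rfl⟩
  obtain ⟨n, hn0⟩ : ∃ n, n = Real.sqrt b := ⟨_, rfl⟩
  have hr : rr b = n / a := by
    rw [rr, ← hs, ← hn0, show 1 - s = 2 * a by linarith]
    field_simp
  have hw : Real.sqrt (1 - (rr b) ^ 2) = m / a := by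
    rw [← hm0] at hm hmp
    rw [← hn0] at hn
    have : 1 - (rr b) ^ 2 = (m / a) ^ 2 := by
      rw [hr]
      field_simp
      nlinarith
    rw [this, Real.sqrt_sq (by positivity)]
  have h2 := Real.mul_self_sqrt (show (0 : ℝ) ≤ 2 by norm_num)
  have h3 := Real.mul_self_sqrt (show (0 : ℝ) ≤ 3 by norm_num)
  have h3p := Real.sqrt_pos.2 (show (0 : ℝ) < 3 by norm_num)
  have h23 : Real.sqrt (2 / 3) = Real.sqrt 2 / Real.sqrt 3 := Real.sqrt_div (by norm_num) 3
  have hcos : Real.cos (th b) = Real.sqrt 2 * m / (4 * n) := by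
    have e : Real.sqrt (1 - 8 * b - s) = Real.sqrt 2 * m := by
      rw [show 1 - 8 * b - s = 2 * (a ^ 2 - b) by linarith, Real.sqrt_mul (by norm_num), hm0]
    rw [th, ← hs, ← hn0, e, Real.cos_arccos]
    · have : 0 ≤ Real.sqrt 2 * m / (4 * n) := by rw [hm0, hn0]; positivity
      linarith
    · rw [hn0, div_le_one (by positivity), hm0]
      refine (sq_le_sq₀ (by positivity) (by positivity)).1 ?_
      rw [mul_pow, mul_pow, Real.sq_sqrt (by norm_num), pow_two, hm, Real.sq_sqrt hb.le]
      nlinarith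
  have hsin : 0 ≤ Real.sin (th b) := by
    rw [th]
    exact Real.sin_nonneg_of_mem_Icc ⟨Real.arccos_nonneg _, Real.arccos_le_pi _⟩
  have hsc := Real.sin_sq_add_cos_sq (th b)
  rw [← ha, ← hA, ← hm0, ← hn0]
  rw [← hm0] at hm hmp
  rw [← hn0] at hn hnp
  have hX : - (A * m / (6 * n)) = - (A * Real.sqrt 2 / 3 * Real.cos (th b)) := by
    rw [hcos]
    field_simp
    nlinarith
  have hp1 : A * (1 / Real.sqrt 3) * (1 / Real.sqrt 3) = A / 3 := by
    calc _ = A / (Real.sqrt 3 * Real.sqrt 3) := by field_simp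
      _ = _ := by rw [h3]
  have hp2 : A * (1 / Real.sqrt 3) * (Real.sqrt 2 / Real.sqrt 3) = A * Real.sqrt 2 / 3 := by
    calc _ = A * Real.sqrt 2 / (Real.sqrt 3 * Real.sqrt 3) := by field_simp
      _ = _ := by rw [h3]
  have hp3 : A * (Real.sqrt 2 / Real.sqrt 3) * (Real.sqrt 2 / Real.sqrt 3) = 2 * A / 3 := by
    calc _ = A * (Real.sqrt 2 * Real.sqrt 2) / (Real.sqrt 3 * Real.sqrt 3) := by field_simp
      _ = _ := by rw [h2, h3]; ring
  refine ⟨ha0, hA0, by linarith, haA, hab, ?_, ?_, A * Real.sqrt 2 / 3 * Real.sin (th b),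
    by positivity, ?_, ?_, ?_⟩
  · ext i j
    fin_cases i <;> fin_cases j <;> simp [canonE, outer_two, psi1, ← ha]
  · rw [show canonE b 1 = (aM b : ℂ) • outer (psi2 b) from rfl, psi2, hw, hr, ← ha, smul_outer_real]
    have e1 : a * (n / a) * (n / a) = b / a := by rw [← hn]; field_simp
    have e2 : a * (n / a) * (m / a) = n * m / a := by field_simp
    have e3 : a * (m / a) * (m / a) = (a ^ 2 - b) / a := by rw [← hm]; field_simp
    rw [e1, e2, e3]
  · rw [hX]
    linear_combination A ^ 2 / 9 * Real.sqrt 2 * Real.sqrt 2 * hsc + A ^ 2 / 9 * h2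
  · rw [hX, show canonE b 2 = (aP b : ℂ) • outer (psi3 b) from rfl, psi3, ← hA, h23,
      smul_outer_exp, hp1, hp2, hp3]
  · have e : -(th b : ℂ) = ((-th b : ℝ) : ℂ) := by push_cast; rfl
    rw [hX, show canonE b 3 = (aP b : ℂ) • outer (psi4 b) from rfl, psi4, ← hA, h23, e,
      smul_outer_exp, hp1, hp2, hp3, Real.cos_neg, Real.sin_neg, mul_neg, neg_neg]

/-- The remaining two effects are determined up to complex conjugation. -/
lemma third (a A b : ℝ) (ha : 0 < a) (hA : 0 < A) (hb : 0 < b) (h : a * A = 3 * b)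
    (hab : b < a ^ 2) (H : Matrix (Fin 2) (Fin 2) ℂ) (hH : H.IsHermitian) (hd : H.det = 0)
    (ht : H.trace = (A : ℂ)) (t1 : (H * !![(a : ℂ), 0; 0, 0]).trace = (b : ℂ))
    (t2 : (H * !![((b / a : ℝ) : ℂ), ((Real.sqrt b * Real.sqrt (a ^ 2 - b) / a : ℝ) : ℂ);
        ((Real.sqrt b * Real.sqrt (a ^ 2 - b) / a : ℝ) : ℂ), (((a ^ 2 - b) / a : ℝ) : ℂ)]).trace
        = (b : ℂ)) :
    ∃ y : ℝ, (- (A * Real.sqrt (a ^ 2 - b) / (6 * Real.sqrt b))) ^ 2 + y ^ 2 = 2 * A ^ 2 / 9 ∧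
      H = !![((A / 3 : ℝ) : ℂ), ⟨- (A * Real.sqrt (a ^ 2 - b) / (6 * Real.sqrt b)), y⟩;
          ⟨- (A * Real.sqrt (a ^ 2 - b) / (6 * Real.sqrt b)), -y⟩, ((2 * A / 3 : ℝ) : ℂ)] := by
  obtain ⟨m, hm0, hm⟩ : ∃ m : ℝ, m = Real.sqrt (a ^ 2 - b) ∧ m * m = a ^ 2 - b :=
    ⟨_, rfl, Real.mul_self_sqrt (by linarith)⟩
  obtain ⟨n, hn0, hn⟩ : ∃ n : ℝ, n = Real.sqrt b ∧ n * n = b :=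
    ⟨_, rfl, Real.mul_self_sqrt hb.le⟩
  rw [← hm0, ← hn0] at t2 ⊢
  have hnne : n ≠ 0 := by rintro rfl; simp at hn; linarith
  have hmne : m ≠ 0 := by rintro rfl; simp at hm; linarith
  have h10 : H 1 0 = star (H 0 1) := (hH.apply 1 0).symm
  have hr : ∀ i, (H i i).im = 0 := fun i => by
    have := congrArg Complex.im (hH.apply i i)
    simp at this
    linarith
  have hr0 := hr 0
  have hr1 := hr 1
  rw [Matrix.det_fin_two, h10] at hd
  have hd' := congrArg Complex.re hd
  have ht' := congrArg Complex.re ht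
  have t1' := congrArg Complex.re t1
  have t2' := congrArg Complex.re t2
  simp [Matrix.trace_fin_two, Matrix.mul_apply, Fin.sum_univ_two, h10, hr0, hr1,
    ← Complex.ofReal_div, ← Complex.ofReal_mul, ← Complex.ofReal_pow, ← Complex.ofReal_sub]
    at hd' ht' t1' t2'
  have e0 : (H 0 0).re = A / 3 := by
    apply mul_right_cancel₀ ha.ne'
    linarith
  have e1 : (H 1 1).re = 2 * A / 3 := by linarith
  have e2 : (H 0 1).re = - (A * m / (6 * n)) := by
    rw [e0, e1] at t2'
    field_simp at t2' ⊢
    apply mul_right_cancel₀ hmne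
    linear_combination t2' + A * hm - a * h
  refine ⟨(H 0 1).im, ?_, ?_⟩
  · rw [← e2]
    rw [e0, e1] at hd'
    nlinarith
  · ext i j
    fin_cases i <;> fin_cases j <;> simp [h10, Complex.ext_iff, e0, e1, e2, hr0, hr1]

lemma perm_exists (t : Fin 4 → ℝ) (s : ℝ) (h : ∀ x, t x = (1 - s) / 2 ∨ t x = (1 + s) / 2)
    (hs : t 0 + t 1 + t 2 + t 3 = 2) : ∃ σ : Equiv.Perm (Fin 4),
      t (σ 0) = (1 - s) / 2 ∧ t (σ 1) = (1 - s) / 2 ∧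
      t (σ 2) = (1 + s) / 2 ∧ t (σ 3) = (1 + s) / 2 := by
  by_cases h0 : s = 0
  · subst h0
    refine ⟨1, ?_⟩
    simp at h
    simp [h]
  · have l0 : ∀ x : ℝ, x = s → x ≠ 0 := by rintro x rfl; exact h0
    rcases h 0 with e0 | e0 <;> rcases h 1 with e1 | e1 <;> rcases h 2 with e2 | e2 <;>
      rcases h 3 with e3 | e3 <;>
      first
      | (exfalso; apply h0; linarith)
      | exact ⟨1, e0, e1, e2, e3⟩
      | exact ⟨Equiv.swap 1 2, e0, e2, e1, e3⟩
      | exact ⟨Equiv.swap 1 3, e0, e3, e2, e1⟩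
      | exact ⟨Equiv.swap 0 2, e2, e1, e0, e3⟩
      | exact ⟨Equiv.swap 0 3, e3, e1, e2, e0⟩
      | exact ⟨Equiv.swap 0 2 * Equiv.swap 1 3, e2, e3, e0, e1⟩

set_option maxHeartbeats 2000000 in
lemma main_four (b : ℝ) (G : Fin 4 → Matrix (Fin 2) (Fin 2) ℂ)
    (h1 : ∀ x, (G x).PosSemidef) (h2 : ∀ x, (G x).rank = 1) (h3 : ∑ x, G x = 1)
    (h4 : ∀ A : Matrix (Fin 2) (Fin 2) ℂ, A.IsHermitian → A ∈ Submodule.span ℝ (Set.range G))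
    (h5 : ∀ x y, x ≠ y → (G x * G y).trace = (b : ℂ)) :
    b ∈ Set.Ioc (1 / 16 : ℝ) (1 / 12) ∧
    ∃ U ∈ Matrix.unitaryGroup (Fin 2) ℂ, ∃ σ : Equiv.Perm (Fin 4),
      ∀ x : Fin 4, U * G (σ x) * Uᴴ = canonE b x := by
  choose v hv hv0 using fun x => outer_of_rank_one (G x) (h1 x) (h2 x)
  obtain ⟨t, ht⟩ : ∃ t : Fin 4 → ℝ, ∀ x,
    t x = Complex.normSq (v x 0) + Complex.normSq (v x 1) := ⟨_, fun _ => rfl⟩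
  have htr : ∀ x, (G x).trace = (t x : ℂ) := fun x => by
    rw [hv, trace_outer, ht]
  have htr2 : ∀ x, (G x * G x).trace = ((t x ^ 2 : ℝ) : ℂ) := fun x => by
    rw [hv, trace_outer_mul, ht]
    congr 1
    have : star (v x 0) * v x 0 + star (v x 1) * v x 1 =
        ((Complex.normSq (v x 0) + Complex.normSq (v x 1) : ℝ) : ℂ) := by
      simp [Complex.normSq_eq_conj_mul_self]
    rw [this, Complex.normSq_ofReal, pow_two]
  have hquad : ∀ x, t x = t x ^ 2 + 3 * b := by
    intro x
    have e : (G x * ∑ y, G y).trace = (t x : ℂ) := by rw [h3, mul_one, htr]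
    rw [Finset.mul_sum, Matrix.trace_sum, ← Finset.add_sum_erase _ _ (Finset.mem_univ x), htr2,
      Finset.sum_congr rfl (fun y hy => h5 x y (Finset.ne_of_mem_erase hy).symm)] at e
    simp at e
    have e' : t x ^ 2 + 3 * b = t x := by
      apply Complex.ofReal_injective
      push_cast
      push_cast at e
      exact e
    exact e'.symm
  have hsum : t 0 + t 1 + t 2 + t 3 = 2 := by
    have e := congrArg Matrix.trace h3
    rw [Matrix.trace_sum, Fin.sum_univ_four] at e
    simp only [htr, Matrix.trace_one, Fintype.card_fin] at e
    exact_mod_cast e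
  have hb12 : b ≤ 1 / 12 := by nlinarith [hquad 0, sq_nonneg (2 * t 0 - 1)]
  have htpos : ∀ x, 0 < t x := by
    intro x
    rw [ht]
    have a0 := Complex.normSq_nonneg (v x 0)
    have a1 := Complex.normSq_nonneg (v x 1)
    rcases eq_or_lt_of_le (add_nonneg a0 a1) with e | e
    · exfalso
      apply hv0 x
      ext i
      fin_cases i
      · exact Complex.normSq_eq_zero.1 (show Complex.normSq (v x 0) = 0 by linarith)
      · exact Complex.normSq_eq_zero.1 (show Complex.normSq (v x 1) = 0 by linarith)
    · exact e
  have hnsq : ∀ x y, x ≠ y →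
      Complex.normSq (star (v x 0) * v y 0 + star (v x 1) * v y 1) = b := by
    intro x y hxy
    have := h5 x y hxy
    rw [hv x, hv y, trace_outer_mul] at this
    exact_mod_cast this
  have hb0 : 0 < b := by
    have hb0 : 0 ≤ b := by
      rw [← hnsq 0 1 (by decide)]
      exact Complex.normSq_nonneg _
    rcases eq_or_lt_of_le hb0 with e | e
    · exfalso
      have : ∀ x, t x = 1 := fun x => by
        have := hquad x
        rw [← e] at this
        have hp := htpos x
        apply mul_left_cancel₀ hp.ne'
        nlinarith
      rw [this, this, this, this] at hsum
      norm_num at hsum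
    · exact e
  obtain ⟨s, hs⟩ : ∃ s, s = Real.sqrt (1 - 12 * b) := ⟨_, rfl⟩
  have hs0 : 0 ≤ s := by rw [hs]; positivity
  have hss : s * s = 1 - 12 * b := by rw [hs]; exact Real.mul_self_sqrt (by linarith)
  have hval : ∀ x, t x = (1 - s) / 2 ∨ t x = (1 + s) / 2 := by
    intro x
    have : (t x - (1 - s) / 2) * (t x - (1 + s) / 2) = 0 := by nlinarith [hquad x]
    rcases mul_eq_zero.1 this with h | h
    · left; linarith
    · right; linarith
  obtain ⟨σ, q0, q1, q2, q3⟩ := perm_exists t s hval hsum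
  have hne : ∀ x y : Fin 4, x ≠ y → σ x ≠ σ y := fun x y h => fun e => h (σ.injective e)
  have hlt : b < ((1 - s) / 2) ^ 2 := by
    have hD : (G (σ 0) - G (σ 1)).IsHermitian := (h1 _).1.sub (h1 _).1
    have hDe : ((G (σ 0) - G (σ 1))ᴴ * (G (σ 0) - G (σ 1))).trace
        = ((2 * ((1 - s) / 2) ^ 2 - 2 * b : ℝ) : ℂ) := by
      rw [hD.eq, sub_mul, mul_sub, mul_sub]
      simp only [Matrix.trace_sub, htr2, h5 _ _ (hne 0 1 (by decide)),
        h5 _ _ (hne 1 0 (by decide)), q0, q1]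
      push_cast
      ring
    have hge : (0 : ℂ) ≤ ((2 * ((1 - s) / 2) ^ 2 - 2 * b : ℝ) : ℂ) := by
      rw [← hDe]
      exact (Matrix.posSemidef_conjTranspose_mul_self _).trace_nonneg
    have hge' : 0 ≤ 2 * ((1 - s) / 2) ^ 2 - 2 * b := by exact_mod_cast hge
    rcases eq_or_lt_of_le hge' with e | e
    · exfalso
      rw [← e, Complex.ofReal_zero] at hDe
      have := Matrix.trace_conjTranspose_mul_self_eq_zero_iff.1 hDe
      exact G_inj G h4 _ _ (hne 0 1 (by decide)) (sub_eq_zero.1 this)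
    · linarith
  have hb16 : 1 / 16 < b := by
    have : s < 1 - 8 * b := by nlinarith
    have h' : s * s < (1 - 8 * b) * (1 - 8 * b) := by nlinarith
    by_contra hcon
    nlinarith
  refine ⟨⟨hb16, hb12⟩, ?_⟩
  obtain ⟨ha, hA, haA1, haA, hab, c0, c1, Y, hY0, hY, c2, c3⟩ := param b hb16 hb12
  have haM : (1 - s) / 2 = aM b := by rw [aM, hs]
  have haP : (1 + s) / 2 = aP b := by rw [aP, hs]
  rw [haM] at q0 q1
  rw [haP] at q2 q3
  obtain ⟨U, hU, u0, u1⟩ := exists_unitary (aM b) b ha hb0 hab (v (σ 0)) (v (σ 1))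
    (by rw [← ht, q0]) (by rw [← ht, q1]) (hnsq _ _ (hne 0 1 (by decide)))
  rw [← hv] at u0 u1
  have hUU : Uᴴ * U = 1 := by
    have := Matrix.mem_unitaryGroup_iff'.1 hU
    rwa [Matrix.star_eq_conjTranspose] at this
  have hUU' : U * Uᴴ = 1 := by
    have := Matrix.mem_unitaryGroup_iff.1 hU
    rwa [Matrix.star_eq_conjTranspose] at this
  have htrc : ∀ M : Matrix (Fin 2) (Fin 2) ℂ, (U * M * Uᴴ).trace = M.trace := by
    intro M
    rw [Matrix.trace_mul_comm, ← mul_assoc, hUU, one_mul]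
  have hmulc : ∀ M N : Matrix (Fin 2) (Fin 2) ℂ,
      (U * M * Uᴴ) * (U * N * Uᴴ) = U * (M * N) * Uᴴ := by
    intro M N
    calc (U * M * Uᴴ) * (U * N * Uᴴ) = U * M * (Uᴴ * U) * N * Uᴴ := by simp only [mul_assoc]
      _ = _ := by rw [hUU]; simp only [mul_assoc, mul_one, one_mul]
  have hdet : ∀ x, (G x).det = 0 := by
    intro x
    rw [hv, Matrix.det_fin_two]
    simp [outer, Matrix.vecMulVec_apply]
    ring
  have hthird : ∀ x : Fin 4, x ≠ 0 → x ≠ 1 → t (σ x) = aP b → _ := fun x hx0 hx1 hx =>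
    third (aM b) (aP b) b ha hA hb0 haA hab (U * G (σ x) * Uᴴ)
      (Matrix.isHermitian_mul_mul_conjTranspose U (h1 _).1)
      (by rw [Matrix.det_mul, Matrix.det_mul, hdet]; simp)
      (by rw [htrc, htr, hx])
      (by rw [← u0, hmulc, htrc, h5 _ _ (hne _ _ hx0)])
      (by rw [← u1, hmulc, htrc, h5 _ _ (hne _ _ hx1)])
  obtain ⟨y3, hy3, H3⟩ := hthird 2 (by decide) (by decide) q2
  obtain ⟨y4, hy4, H4⟩ := hthird 3 (by decide) (by decide) q3
  have hsumH : U * G (σ 0) * Uᴴ + U * G (σ 1) * Uᴴ + U * G (σ 2) * Uᴴ + U * G (σ 3) * Uᴴ = 1 := by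
    rw [← add_mul, ← add_mul, ← add_mul, ← mul_add, ← mul_add, ← mul_add,
      ← Fin.sum_univ_four (fun x => G (σ x)), Equiv.sum_comp σ G, h3, mul_one, hUU']
  have hyy : y3 + y4 = 0 := by
    rw [u0, u1, H3, H4] at hsumH
    have := congrArg Complex.im (congrFun (congrFun hsumH 0) 1)
    simpa [-Complex.ofReal_div, -Complex.ofReal_mul] using this
  have hy4' : y4 = - y3 := by linarith
  subst hy4'
  have hyY : y3 ^ 2 = Y ^ 2 := by linarith
  refine ⟨U, hU, ?_⟩
  rcases sq_eq_sq_iff_eq_or_eq_neg.1 hyY with e | e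
  · subst e
    refine ⟨σ, ?_⟩
    intro x
    fin_cases x
    · exact u0.trans c0.symm
    · exact u1.trans c1.symm
    · exact H3.trans c2.symm
    · rw [neg_neg] at H4
      exact H4.trans c3.symm
  · subst e
    rw [neg_neg] at H3 H4
    refine ⟨σ * Equiv.swap 2 3, ?_⟩
    intro x
    fin_cases x
    · exact u0.trans c0.symm
    · exact u1.trans c1.symm
    · exact H4.trans c2.symm
    · exact H3.trans c3.symm

theorem unitary_equiv_canonE (b : ℝ)
    (G : Fin (2 ^ 2) → Matrix (Fin 2) (Fin 2) ℂ) (hG : IsSemiSIC 2 b G) :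
    b ∈ Set.Ioc (1 / 16 : ℝ) (1 / 12) ∧
    ∃ U ∈ Matrix.unitaryGroup (Fin 2) ℂ, ∃ σ : Equiv.Perm (Fin 4),
      ∀ x : Fin 4, (U : Matrix (Fin 2) (Fin 2) ℂ) * G (σ x) *
        (U : Matrix (Fin 2) (Fin 2) ℂ)ᴴ = canonE b x := by
  obtain ⟨h1, h2, h3, h4, h5⟩ := hG
  exact main_four b G h1 h2 h3 h4 h5
end
end
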